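/- arXiv:2409.18831 — 3 statements merged into one kernel-verified Lean document; each statement's English description precedes it below -/
import Mathlib

section
/- Let 0 < ε < 1 and 0 < δ < ε²/48 be real numbers. For any x ∈ M with ‖x‖ ≤ 1, ‖x − x*‖₂ ≤ δ, and ‖x − x²‖₂ ≤ δ, there exists a projection p ∈ M such that ‖x − p‖₂ < ε. -/
/-!
The projection is the spectral projection of `a = (x + x*)/2` for `[1/2, ∞)`. To avoid fractions
everything is doubled: put `A = x + x*`, `h = A - 1` and `p` = the orthogonal projection onto the
kernel of `h⁻`. Since `h⁻` commutes with the commutant of `M`, `p ∈ M`; moreover `p h⁺ = h⁺` and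
`p h⁻ = 0`. With `d = |h| = h⁺ + h⁻` and `w = 1 - d` this gives

* `(A - 2p)² = w²` and `2A - A² = 1 - d²`, hence
* `(2A - A²)² = (A - 2p)² + 2 w d w + (d w)²`,

so `‖A - 2p‖₂ ≤ ‖2A - A²‖₂` because `τ` is nonnegative on positive elements of `M`
(`exists_projection`). On the other hand `2A - A²` equals `4(x - x²)` up to terms which are
multiples of `K = x - x*` by contractions, and left and right multiplication by a contraction of
`M` do not increase the 2-norm (`nsq_mul_le`, `nsq_star`). The triangle inequality is replaced by
`‖y + z‖₂² ≤ 2‖y‖₂² + 2‖z‖₂²` (`nsq_add_le`), whose loss is absorbed by the constant `48`.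
-/

open scoped ComplexOrder

/-- The tracial 2-norm `‖x‖₂ = (τ(x*x))^{1/2}` associated to a linear functional `τ`
on the bounded operators of a Hilbert space. -/
noncomputable def tnorm {H : Type*} [NormedAddCommGroup H] [InnerProductSpace ℂ H]
    [CompleteSpace H] (τ : (H →L[ℂ] H) →ₗ[ℂ] ℂ) (x : H →L[ℂ] H) : ℝ :=
  Real.sqrt (τ (star x * x)).re

section helpers

variable {H : Type*} [NormedAddCommGroup H] [InnerProductSpace ℂ H] [CompleteSpace H]
  {M : VonNeumannAlgebra H} {τ : (H →L[ℂ] H) →ₗ[ℂ] ℂ}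

/-- The squared 2-norm `‖y‖₂² = τ(y*y)`, as a real number. -/
noncomputable def nsq (τ : (H →L[ℂ] H) →ₗ[ℂ] ℂ) (y : H →L[ℂ] H) : ℝ := (τ (star y * y)).re

/-- The double commutant property, as a membership test. -/
lemma mem_of_commute_commutant {y : H →L[ℂ] H}
    (hy : ∀ m ∈ M.commutant, Commute y m) : y ∈ M := by
  rw [← M.commutant_commutant, VonNeumannAlgebra.mem_commutant_iff]
  exact fun m hm => (hy m hm).eq.symm

lemma commute_of_mem {y m : H →L[ℂ] H} (hy : y ∈ M) (hm : m ∈ M.commutant) : Commute y m :=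
  VonNeumannAlgebra.mem_commutant_iff.1 hm y hy

lemma nsq_nonneg (hτpos : ∀ x ∈ M, 0 ≤ τ (star x * x)) {y : H →L[ℂ] H} (hy : y ∈ M) :
    0 ≤ nsq τ y :=
  (Complex.le_def.1 (hτpos y hy)).1

lemma re_nonneg_of_nonneg (hτpos : ∀ x ∈ M, 0 ≤ τ (star x * x)) {y : H →L[ℂ] H} (hy : y ∈ M)
    (h0 : 0 ≤ y) : 0 ≤ (τ y).re := by
  have hs : CFC.sqrt y ∈ M := mem_of_commute_commutant fun m hm =>
    (commute_of_mem hy hm).cfcₙ_nnreal _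
  have h := nsq_nonneg hτpos hs
  have hsa : star (CFC.sqrt y) = CFC.sqrt y :=
    (IsSelfAdjoint.of_nonneg (CFC.sqrt_nonneg y)).star_eq
  rwa [nsq, hsa, CFC.sqrt_mul_sqrt_self y h0] at h

lemma nsq_add_self (y : H →L[ℂ] H) : nsq τ (y + y) = 4 * nsq τ y := by
  simp only [nsq, star_add, mul_add, add_mul, map_add, Complex.add_re]
  ring

lemma nsq_neg (y : H →L[ℂ] H) : nsq τ (-y) = nsq τ y := by
  simp [nsq]

lemma nsq_add_le (hτpos : ∀ x ∈ M, 0 ≤ τ (star x * x)) {y z : H →L[ℂ] H} (hy : y ∈ M)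
    (hz : z ∈ M) : nsq τ (y + z) ≤ 2 * nsq τ y + 2 * nsq τ z := by
  have h := nsq_nonneg hτpos (sub_mem hy hz)
  simp only [nsq, star_add, star_sub, mul_add, add_mul, mul_sub, sub_mul, map_add, map_sub,
    Complex.add_re, Complex.sub_re] at h ⊢
  linarith

lemma nsq_star (hτtr : ∀ x ∈ M, ∀ y ∈ M, τ (x * y) = τ (y * x)) {y : H →L[ℂ] H} (hy : y ∈ M) :
    nsq τ (star y) = nsq τ y := by
  rw [nsq, nsq, star_star, hτtr y hy _ (star_mem hy)]

lemma nsq_mul_le (hτpos : ∀ x ∈ M, 0 ≤ τ (star x * x)) {y z : H →L[ℂ] H} (hy : y ∈ M)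
    (hz : z ∈ M) (hz1 : ‖z‖ ≤ 1) : nsq τ (z * y) ≤ nsq τ y := by
  have hle : star z * z ≤ 1 := by
    rw [← CStarAlgebra.norm_le_one_iff_of_nonneg _ (star_mul_self_nonneg z),
      CStarRing.norm_star_mul_self]
    nlinarith [norm_nonneg z]
  have h0 : 0 ≤ star y * (1 - star z * z) * y :=
    star_left_conjugate_nonneg (sub_nonneg.2 hle) y
  have h := re_nonneg_of_nonneg hτpos (mul_mem (mul_mem (star_mem hy)
    (sub_mem (one_mem M) (mul_mem (star_mem hz) hz))) hy) h0
  have e : star y * (1 - star z * z) * y = star y * y - star (z * y) * (z * y) := by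
    rw [star_mul]; noncomm_ring
  rw [e, map_sub, Complex.sub_re] at h
  simpa [nsq] using h

/-- The orthogonal projection onto `ker c` lies in `M`, as `ker c` is invariant under the
commutant. -/
lemma starProjection_ker_mem {c : H →L[ℂ] H} (hc : c ∈ M) :
    c.ker.starProjection ∈ M := by
  rw [VonNeumannAlgebra.IsStarProjection.mem_iff isStarProjection_starProjection]
  intro m hm
  rw [Submodule.range_starProjection, Module.End.mem_invtSubmodule_iff_forall_mem_of_mem]
  intro v hv
  have h := congrArg (fun T : H →L[ℂ] H => T v) (commute_of_mem hc hm).eq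
  have hv' : c v = 0 := hv
  simp only [mul_apply_eq_comp, hv', map_zero] at h
  exact h

/-- For self-adjoint `A ∈ M` there is a projection with `‖A - 2p‖₂ ≤ ‖2A - A²‖₂`. -/
lemma exists_projection (hτpos : ∀ x ∈ M, 0 ≤ τ (star x * x)) {A : H →L[ℂ] H} (hA : A ∈ M)
    (hAs : star A = A) : ∃ p ∈ M, star p = p ∧ p * p = p ∧
      nsq τ (A - (p + p)) ≤ nsq τ (A + A - A * A) := by
  set h := A - 1 with hh
  have hhM : h ∈ M := sub_mem hA (one_mem M)
  have hhs : IsSelfAdjoint h := by simp [hh, IsSelfAdjoint, hAs]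
  obtain ⟨b, hb⟩ : ∃ b, b = h⁺ := ⟨_, rfl⟩
  obtain ⟨c, hc⟩ : ∃ c, c = h⁻ := ⟨_, rfl⟩
  have hbM : b ∈ M := mem_of_commute_commutant fun m hm => by
    rw [hb, CFC.posPart_def]; exact (commute_of_mem hhM hm).cfcₙ_real _
  have hcM : c ∈ M := mem_of_commute_commutant fun m hm => by
    rw [hc, CFC.negPart_def]; exact (commute_of_mem hhM hm).cfcₙ_real _
  have hb0 : 0 ≤ b := hb ▸ CFC.posPart_nonneg h
  have hc0 : 0 ≤ c := hc ▸ CFC.negPart_nonneg h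
  have hbs : star b = b := (IsSelfAdjoint.of_nonneg hb0).star_eq
  have hcs : star c = c := (IsSelfAdjoint.of_nonneg hc0).star_eq
  have hbc : b * c = 0 := by rw [hb, hc, CFC.posPart_mul_negPart]
  have hcb : c * b = 0 := by rw [hb, hc, CFC.negPart_mul_posPart]
  have hAe : A = b - c + 1 := by
    rw [hb, hc, CFC.posPart_sub_negPart h hhs, hh]; abel
  obtain ⟨p, hp⟩ : ∃ p, p = c.ker.starProjection := ⟨_, rfl⟩
  have hpM : p ∈ M := hp ▸ starProjection_ker_mem hcM
  have hpp : IsStarProjection p := hp ▸ isStarProjection_starProjection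
  have hps : star p = p := hpp.isSelfAdjoint.star_eq
  have hpi : p * p = p := hpp.isIdempotentElem
  have hpb : p * b = b := by
    ext v
    rw [mul_apply_eq_comp, hp, Submodule.starProjection_eq_self_iff]
    exact congrArg (fun T : H →L[ℂ] H => T v) hcb
  have hcp : c * p = 0 := by
    ext v
    rw [hp]
    exact Submodule.starProjection_apply_mem c.ker v
  have hbp : b * p = b := by simpa [hbs, hps] using congrArg star hpb
  have hpc : p * c = 0 := by simpa [hcs, hps] using congrArg star hcp
  refine ⟨p, hpM, hps, hpi, ?_⟩
  obtain ⟨d, hd⟩ : ∃ d, d = b + c := ⟨_, rfl⟩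
  have hdM : d ∈ M := hd ▸ add_mem hbM hcM
  have hd0 : 0 ≤ d := hd ▸ add_nonneg hb0 hc0
  have hds : star d = d := by rw [hd, star_add, hbs, hcs]
  have hwM : 1 - d ∈ M := sub_mem (one_mem M) hdM
  have hws : star (1 - d) = 1 - d := by rw [star_sub, star_one, hds]
  have t1 : 0 ≤ (τ (star (1 - d) * d * (1 - d))).re :=
    re_nonneg_of_nonneg hτpos (mul_mem (mul_mem (star_mem hwM) hdM) hwM)
      (star_left_conjugate_nonneg hd0 _)
  have t2 := nsq_nonneg hτpos (mul_mem hdM hwM)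
  have e1 : star (A - (p + p)) * (A - (p + p)) = (1 - d) * (1 - d) := by
    rw [star_sub, star_add, hAs, hps, hAe, hd]
    simp only [mul_add, add_mul, mul_sub, sub_mul, hbc, hcb, hpb, hbp, hpc, hcp, hpi, mul_one,
      one_mul]
    abel
  have e2 : A + A - A * A = 1 - d * d := by
    rw [hAe, hd]
    simp only [mul_add, add_mul, mul_sub, sub_mul, hbc, hcb, mul_one, one_mul]
    abel
  have e3 : star (1 - d * d) * (1 - d * d) = (1 - d) * (1 - d) + star (1 - d) * d * (1 - d)
      + star (1 - d) * d * (1 - d) + star (d * (1 - d)) * (d * (1 - d)) := by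
    simp only [star_sub, star_mul, star_one, hds]
    noncomm_ring
  rw [e2]
  simp only [nsq] at t2 ⊢
  rw [e1, e3]
  simp only [map_add, Complex.add_re]
  linarith

end helpers

theorem stmt0 {H : Type*} [NormedAddCommGroup H] [InnerProductSpace ℂ H] [CompleteSpace H]
    (M : VonNeumannAlgebra H) (τ : (H →L[ℂ] H) →ₗ[ℂ] ℂ)
    -- `τ` is a tracial state on `M`:
    (hτ1 : τ 1 = 1)
    (hτpos : ∀ x ∈ M, 0 ≤ τ (star x * x))
    (hτtr : ∀ x ∈ M, ∀ y ∈ M, τ (x * y) = τ (y * x))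
    (ε δ : ℝ) (hε0 : 0 < ε) (hε1 : ε < 1) (hδ0 : 0 < δ) (hδ : δ < ε ^ 2 / 48)
    (x : H →L[ℂ] H) (hxM : x ∈ M) (hx : ‖x‖ ≤ 1)
    (h1 : tnorm τ (x - star x) ≤ δ) (h2 : tnorm τ (x - x ^ 2) ≤ δ) :
    ∃ p ∈ M, star p = p ∧ p * p = p ∧ tnorm τ (x - p) < ε := by
  obtain ⟨K, hK⟩ : ∃ K, K = x - star x := ⟨_, rfl⟩
  obtain ⟨q, hq⟩ : ∃ q, q = x - x ^ 2 := ⟨_, rfl⟩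
  have hsM : star x ∈ M := star_mem hxM
  have hsx : ‖star x‖ ≤ 1 := by rwa [norm_star]
  have hKM : K ∈ M := hK ▸ sub_mem hxM hsM
  have hqM : q ∈ M := hq ▸ sub_mem hxM (pow_mem hxM 2)
  have hKs : star K = -K := by rw [hK]; simp
  have nK : nsq τ K ≤ δ ^ 2 := by rw [hK]; exact (Real.sqrt_le_iff.1 h1).2
  have nq : nsq τ q ≤ δ ^ 2 := by rw [hq]; exact (Real.sqrt_le_iff.1 h2).2
  -- Right multiplication is reduced to left multiplication by taking adjoints.
  have right : ∀ z ∈ M, ‖z‖ ≤ 1 → nsq τ (K * z) ≤ nsq τ K := fun z hz hz1 => by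
    rw [← nsq_star hτtr (mul_mem hKM hz), star_mul, hKs, mul_neg, nsq_neg]
    exact nsq_mul_le hτpos hKM (star_mem hz) (by rwa [norm_star])
  have nxK := nsq_mul_le hτpos hKM hxM hx
  have nKx := right x hxM hx
  have nKs := right (star x) hsM hsx
  obtain ⟨p, hpM, hps, hpi, hle⟩ := exists_projection hτpos (add_mem hxM hsM)
    (show star (x + star x) = x + star x by rw [star_add, star_star, add_comm])
  refine ⟨p, hpM, hps, hpi, ?_⟩
  have e : x + star x + (x + star x) - (x + star x) * (x + star x)
      = ((q + q) + (q + q)) +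
        ((-(K + K) + (x * K + x * K)) + (K * x + K * star x)) := by
    rw [hq, hK]; noncomm_ring
  have mK2 := neg_mem (add_mem hKM hKM)
  have mxK := mul_mem hxM hKM
  have mKx := mul_mem hKM hxM
  have mKs := mul_mem hKM hsM
  have b1 := nsq_add_le hτpos (add_mem (add_mem hqM hqM) (add_mem hqM hqM))
    (add_mem (add_mem mK2 (add_mem mxK mxK)) (add_mem mKx mKs))
  have b2 := nsq_add_le hτpos (add_mem mK2 (add_mem mxK mxK)) (add_mem mKx mKs)
  have b3 := nsq_add_le hτpos mK2 (add_mem mxK mxK)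
  have b4 := nsq_add_le hτpos mKx mKs
  rw [nsq_neg] at b3
  rw [e] at hle
  have e' : (x - p) + (x - p) = K + (x + star x - (p + p)) := by rw [hK]; abel
  have b5 := nsq_add_le hτpos hKM (sub_mem (add_mem hxM hsM) (add_mem hpM hpM))
  rw [← e'] at b5
  simp only [nsq_add_self] at b1 b2 b3 b5
  have hfin : nsq τ (x - p) ≤ 226 / 4 * δ ^ 2 := by linarith
  have hδε : 48 * δ < ε := by nlinarith
  exact (Real.sqrt_lt' hε0).2 (hfin.trans_lt (by nlinarith))
end

section
/- Assume that any two projections e, f ∈ M with τ(e) = τ(f) are Murray–von Neumann equivalent in M (there is w ∈ M with w*w = e and ww* = f); this holds in every II₁ factor with its trace. Let p, q ∈ M be projections such that p ∼ q, i.e. there is a partial isometry in M implementing their equivalence. Let 0 < ε < 1 and 0 < δ < ε¹⁶/11¹⁶ be real numbers. Then for any x ∈ M with ‖x‖ ≤ 1, ‖x*x − p‖₂ ≤ δ, and ‖xx* − q‖₂ ≤ δ, there exists v ∈ M with v*v = p, vv* = q, and ‖x − v‖₂ < ε. -/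
/-!
Compress `x` to the corner: `y = q x p`. The hypotheses give `‖x - y‖₂² ≤ 4δ` and
`τ(p) - τ(y*y) ≤ 3δ`, because `‖x(1 - p)‖₂² = τ((1 - p)(x*x - p)(1 - p)) ≤ ‖x*x - p‖₂ ≤ δ`,
symmetrically `‖(1 - q)x‖₂² ≤ δ`, and `|τ(x*x) - τ(p)| ≤ ‖x*x - p‖₂ ≤ δ`.

Take the polar decomposition `y = u|y|` inside `M` and put `s = u*u ≤ p`, `f = uu* ≤ q`.
As `τ(p) = τ(q)` and `τ(s) = τ(f)`, the projections `p - s` and `q - f` have the same trace, so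
there is `w ∈ M` with `w*w = p - s` and `ww* = q - f`. Then `v = u + w` implements `p ∼ q`.
Since `0 ≤ |y| ≤ 1`, we have `|y|² ≤ |y|` and `|y|² ≤ s`, whence
`‖y - u‖₂² = τ(|y|² - 2|y| + s) ≤ τ(s) - τ(y*y) ≤ 3δ` and `‖w‖₂² = τ(p) - τ(s) ≤ 3δ`.
Applying `‖a + b‖₂² ≤ 2‖a‖₂² + 2‖b‖₂²` twice yields `‖x - v‖₂² ≤ 32δ < ε²`.

The polar decomposition is built by extending `|y|ξ ↦ yξ` from the range of `|y|` to its closure;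
it lies in `M` because it commutes with the commutant of `M`.
-/

open scoped ComplexOrder

/-! ### Polar decomposition in a von Neumann algebra -/

section Polar

variable {H : Type*} [NormedAddCommGroup H] [InnerProductSpace ℂ H] [CompleteSpace H]

/-- The projection onto the closure of the range of `T`, characterised algebraically. -/
theorem exists_range_proj (T : H →L[ℂ] H) : ∃ P : H →L[ℂ] H, star P = P ∧ P * P = P ∧ P * T = T ∧
    ∀ A : H →L[ℂ] H, A * T = 0 → A * P = 0 := by
  set K : Submodule ℂ H := (LinearMap.range (T : H →ₗ[ℂ] H)).topologicalClosure with hK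
  have : CompleteSpace K :=
    (Submodule.isClosed_topologicalClosure _).completeSpace_coe
  have hP : IsStarProjection K.starProjection := isStarProjection_starProjection
  refine ⟨K.starProjection, hP.isSelfAdjoint.star_eq, hP.isIdempotentElem, ?_, ?_⟩
  · ext ξ
    exact Submodule.starProjection_eq_self_iff.2
      (Submodule.le_topologicalClosure _ (LinearMap.mem_range_self (T : H →ₗ[ℂ] H) ξ))
  · intro A hA
    have hle : K ≤ LinearMap.ker (A : H →ₗ[ℂ] H) := by
      refine Submodule.topologicalClosure_minimal _ ?_ A.isClosed_ker
      rintro _ ⟨ξ, rfl⟩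
      exact congrArg (fun B : H →L[ℂ] H => B ξ) hA
    ext ξ
    exact hle (K.starProjection_apply_mem ξ)

/-- If `‖yξ‖ = ‖Tξ‖` for all `ξ` (encoded as `y*y = T*T`), then `y` factors through `T`. -/
theorem exists_factor (y T : H →L[ℂ] H) (h : star y * y = star T * T) :
    ∃ u : H →L[ℂ] H, u * T = y := by
  set K : Submodule ℂ H := (LinearMap.range (T : H →ₗ[ℂ] H)).topologicalClosure with hK
  have : CompleteSpace K :=
    (Submodule.isClosed_topologicalClosure _).completeSpace_coe
  have hmem : ∀ ξ, (T : H →ₗ[ℂ] H) ξ ∈ K := fun ξ =>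
    Submodule.le_topologicalClosure _ (LinearMap.mem_range_self (T : H →ₗ[ℂ] H) ξ)
  let e : H →ₗ[ℂ] K := (T : H →ₗ[ℂ] H).codRestrict K hmem
  have hdense : DenseRange e := by
    intro k
    rw [closure_subtype]
    have hk : (k : H) ∈ closure (LinearMap.range (T : H →ₗ[ℂ] H) : Set H) := k.2
    refine closure_mono ?_ hk
    rintro _ ⟨ξ, rfl⟩
    exact ⟨e ξ, ⟨ξ, rfl⟩, rfl⟩
  have hnorm : ∀ ξ, ‖(y : H →ₗ[ℂ] H) ξ‖ ≤ 1 * ‖e ξ‖ := by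
    intro ξ
    have key : ∀ B : H →L[ℂ] H, ‖B ξ‖ ^ 2 = (inner ℂ ((star B * B) ξ) ξ).re := by
      intro B
      rw [ContinuousLinearMap.star_eq_adjoint]
      exact ContinuousLinearMap.apply_norm_sq_eq_inner_adjoint_left B ξ
    have h2 : ‖y ξ‖ ^ 2 = ‖T ξ‖ ^ 2 := by rw [key y, key T, h]
    rw [one_mul]
    exact le_of_eq ((sq_eq_sq₀ (norm_nonneg _) (norm_nonneg _)).1 h2)
  refine ⟨((y : H →ₗ[ℂ] H).extendOfNorm e) ∘L K.orthogonalProjectionOnto, ?_⟩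
  ext ξ
  have h1 : K.orthogonalProjectionOnto (T ξ) = e ξ :=
    Submodule.orthogonalProjectionOnto_mem_subspace_eq_self (e ξ)
  have h3 := LinearMap.extendOfNorm_eq hdense ⟨1, hnorm⟩ ξ
  change ((y : H →ₗ[ℂ] H).extendOfNorm e) (K.orthogonalProjectionOnto (T ξ)) = y ξ
  rw [h1, h3]
  rfl

theorem mem_of_commutes (M : VonNeumannAlgebra H) {z : H →L[ℂ] H}
    (h : ∀ a ∈ M.commutant, a * z = z * a) : z ∈ M := by
  rw [← M.commutant_commutant]
  exact VonNeumannAlgebra.mem_commutant_iff.2 h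

theorem sqrt_mem (M : VonNeumannAlgebra H) {z : H →L[ℂ] H} (hz : z ∈ M) : CFC.sqrt z ∈ M := by
  refine mem_of_commutes M fun a ha => ?_
  have h : Commute z a := VonNeumannAlgebra.mem_commutant_iff.1 ha z hz
  exact (h.cfcₙ_nnreal NNReal.sqrt).eq.symm

/-- Polar decomposition `y = uT`, `T = |y|`, inside a von Neumann algebra. Together with
`star u * u * T = T`, the last clause says that `star u * u` is the projection onto the closure
of the range of `T`. -/
theorem exists_polar (M : VonNeumannAlgebra H) {y : H →L[ℂ] H} (hy : y ∈ M) :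
    ∃ u ∈ M, ∃ T ∈ M, 0 ≤ T ∧ T * T = star y * y ∧ u * T = y ∧ star u * u * T = T ∧
      u * (star u * u) = u ∧ ∀ A : H →L[ℂ] H, A * T = 0 → A * (star u * u) = 0 := by
  set T := CFC.sqrt (star y * y) with hTdef
  have hT0 : 0 ≤ T := CFC.sqrt_nonneg _
  have hTs : star T = T := (IsSelfAdjoint.of_nonneg hT0).star_eq
  have hTT : T * T = star y * y := CFC.sqrt_mul_sqrt_self _ (star_mul_self_nonneg y)
  have hTM : T ∈ M := sqrt_mem M (mul_mem (star_mem hy) hy)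
  obtain ⟨P, hPs, hPP, hPT, hPu⟩ := exists_range_proj T
  obtain ⟨u₀, hu₀⟩ := exists_factor y T (by rw [hTs, hTT])
  set u := u₀ * P with hu
  have huP : u * P = u := by rw [hu, mul_assoc, hPP]
  have huT : u * T = y := by rw [hu, mul_assoc, hPT, hu₀]
  have hPus : P * star u = star u := by
    have := congrArg star huP
    rwa [star_mul, hPs] at this
  have hTP : T * P = T := by
    have := congrArg star hPT
    rwa [star_mul, hPs, hTs] at this
  have huu : star u * u = P := by
    have e1 : (T * (star u * u - P)) * T = 0 := by
      have : star (u * T) * (u * T) = T * T := by rw [huT, hTT]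
      rw [star_mul, hTs] at this
      rw [mul_sub, sub_mul, hTP, ← this]
      simp only [mul_assoc, sub_self]
    have e2 : T * (star u * u - P) = 0 := by
      have := hPu _ e1
      rwa [mul_assoc, sub_mul, hPP, mul_assoc, huP] at this
    have e3 : (star u * u - P) * T = 0 := by
      have := congrArg star e2
      simpa [star_mul, hTs, hPs] using this
    have e4 := hPu _ e3
    rw [sub_mul, hPP, mul_assoc, huP] at e4
    exact sub_eq_zero.1 e4
  -- A projection commutes with a self-adjoint set that leaves its range invariant.
  have hPcomm : ∀ a ∈ M.commutant, a * P = P * a := by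
    have half : ∀ a ∈ M.commutant, a * P = P * a * P := by
      intro a ha
      have hc : T * a = a * T := VonNeumannAlgebra.mem_commutant_iff.1 ha T hTM
      have := hPu (a - P * a) (by
        rw [sub_mul, mul_assoc, ← hc, ← mul_assoc, hPT, sub_self])
      rwa [sub_mul, sub_eq_zero] at this
    intro a ha
    have h1 := half a ha
    have h2 := congrArg star (half (star a) (star_mem ha))
    simp only [star_mul, star_star, hPs] at h2
    rw [h1, mul_assoc, ← h2]
  have huM : u ∈ M := by
    refine mem_of_commutes M fun a ha => ?_
    have hc : T * a = a * T := VonNeumannAlgebra.mem_commutant_iff.1 ha T hTM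
    have hcy : y * a = a * y := VonNeumannAlgebra.mem_commutant_iff.1 ha y hy
    have := hPu (a * u - u * a) (by
      rw [sub_mul, mul_assoc, huT, mul_assoc, ← hc, ← mul_assoc u, huT, hcy, sub_self])
    rw [sub_mul, mul_assoc, huP, mul_assoc, hPcomm a ha, ← mul_assoc u P a, huP] at this
    exact sub_eq_zero.1 this
  refine ⟨u, huM, T, hTM, hT0, hTT, huT, ?_, ?_, ?_⟩
  · rw [huu, hPT]
  · rw [huu, huP]
  · rw [huu]; exact hPu

/-- An element `w` whose `star w * w` is idempotent is a partial isometry. -/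
theorem mul_star_mul_self_of_idem (w : H →L[ℂ] H)
    (he : (star w * w) * (star w * w) = star w * w) : w * (star w * w) = w := by
  have h : star (w * (star w * w) - w) * (w * (star w * w) - w) = 0 := by
    have h' : star (w * (star w * w) - w) * (w * (star w * w) - w)
        = (star w * w) * (star w * w) * (star w * w) - (star w * w) * (star w * w)
          - (star w * w) * (star w * w) + star w * w := by
      simp only [star_sub, star_mul, star_star]
      noncomm_ring
    rw [h', he, he]
    abel
  exact sub_eq_zero.1 ((CStarRing.star_mul_self_eq_zero_iff _).1 h)

end Polar

/-! ### Estimates for the tracial 2-norm -/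

section Trace

variable {H : Type*} [NormedAddCommGroup H] [InnerProductSpace ℂ H] [CompleteSpace H]

/-- The square of the tracial 2-norm. -/
noncomputable def tsq (τ : (H →L[ℂ] H) →ₗ[ℂ] ℂ) (x : H →L[ℂ] H) : ℝ := (τ (star x * x)).re

variable {M : VonNeumannAlgebra H} {τ : (H →L[ℂ] H) →ₗ[ℂ] ℂ}

theorem tsq_nonneg (hpos : ∀ x ∈ M, 0 ≤ τ (star x * x)) {x : H →L[ℂ] H} (hx : x ∈ M) :
    0 ≤ tsq τ x := (Complex.le_def.1 (hpos x hx)).1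

theorem trace_nonneg (hpos : ∀ x ∈ M, 0 ≤ τ (star x * x)) {z : H →L[ℂ] H} (hz : z ∈ M)
    (h0 : 0 ≤ z) : 0 ≤ (τ z).re := by
  have h := tsq_nonneg hpos (sqrt_mem M hz)
  rwa [tsq, (IsSelfAdjoint.of_nonneg (CFC.sqrt_nonneg z)).star_eq, CFC.sqrt_mul_sqrt_self z h0] at h

theorem tsq_star (htr : ∀ x ∈ M, ∀ y ∈ M, τ (x * y) = τ (y * x)) {x : H →L[ℂ] H} (hx : x ∈ M) :
    tsq τ (star x) = tsq τ x := by
  rw [tsq, tsq, star_star, htr x hx _ (star_mem hx)]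

/-- Pythagoras for a projection acting on the left. -/
theorem tsq_split_left {e : H →L[ℂ] H} (hes : star e = e) (hee : e * e = e) (x : H →L[ℂ] H) :
    tsq τ x = tsq τ (e * x) + tsq τ ((1 - e) * x) := by
  have h : star x * x = star (e * x) * (e * x) + star ((1 - e) * x) * ((1 - e) * x) := by
    have h' : star (e * x) * (e * x) + star ((1 - e) * x) * ((1 - e) * x)
        = star x * (e * e) * x + star x * x - star x * e * x - star x * e * x
          + star x * (e * e) * x := by
      simp only [star_mul, star_sub, star_one, hes]
      noncomm_ring
    rw [h', hee]
    abel
  rw [tsq, tsq, tsq, ← Complex.add_re, ← map_add, ← h]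

/-- Pythagoras for a projection acting on the right. -/
theorem tsq_split_right (htr : ∀ x ∈ M, ∀ y ∈ M, τ (x * y) = τ (y * x)) {e : H →L[ℂ] H}
    (heM : e ∈ M) (hes : star e = e) (hee : e * e = e) {x : H →L[ℂ] H} (hx : x ∈ M) :
    tsq τ x = tsq τ (x * e) + tsq τ (x * (1 - e)) := by
  have h := tsq_split_left (τ := τ) hes hee (star x)
  have h1 : e * star x = star (x * e) := by rw [star_mul, hes]
  have h2 : (1 - e) * star x = star (x * (1 - e)) := by rw [star_mul, star_sub, star_one, hes]
  rw [h1, h2, tsq_star htr hx, tsq_star htr (mul_mem hx heM),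
    tsq_star htr (mul_mem hx (sub_mem (one_mem M) heM))] at h
  exact h

theorem tsq_add_le (hpos : ∀ x ∈ M, 0 ≤ τ (star x * x)) {a b : H →L[ℂ] H} (ha : a ∈ M)
    (hb : b ∈ M) : tsq τ (a + b) ≤ 2 * tsq τ a + 2 * tsq τ b := by
  have h := tsq_nonneg hpos (sub_mem ha hb)
  have hpar : tsq τ (a + b) + tsq τ (a - b) = 2 * tsq τ a + 2 * tsq τ b := by
    simp only [tsq, star_add, star_sub, add_mul, mul_add, sub_mul, mul_sub, map_add, map_sub,
      Complex.add_re, Complex.sub_re]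
    ring
  linarith

/-- The variance inequality `τ(z)² ≤ τ(z²)` for self-adjoint `z`. -/
theorem trace_sq_le (h1 : τ 1 = 1) (hpos : ∀ x ∈ M, 0 ≤ τ (star x * x)) {z : H →L[ℂ] H}
    (hz : z ∈ M) (hs : star z = z) : (τ z).re ^ 2 ≤ tsq τ z := by
  set t : ℝ := (τ z).re with ht
  have hM : z - (t : ℂ) • (1 : H →L[ℂ] H) ∈ M :=
    sub_mem hz (M.toStarSubalgebra.smul_mem (one_mem M.toStarSubalgebra) _)
  have h := tsq_nonneg hpos hM
  have e : tsq τ (z - (t : ℂ) • (1 : H →L[ℂ] H)) = tsq τ z - t ^ 2 := by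
    simp only [tsq, star_sub, star_smul, star_one, hs, sub_mul, mul_sub, smul_mul_assoc,
      mul_smul_comm, one_mul, mul_one, map_sub, map_smul, h1, Complex.sub_re, smul_eq_mul,
      Complex.mul_re, Complex.star_def, Complex.conj_ofReal, Complex.ofReal_re, Complex.ofReal_im, ← ht]
    ring
  linarith

theorem trace_le_of_tsq (h1 : τ 1 = 1) (hpos : ∀ x ∈ M, 0 ≤ τ (star x * x)) {z : H →L[ℂ] H}
    (hz : z ∈ M) (hs : star z = z) {d : ℝ} (hd : 0 ≤ d) (hzd : tsq τ z ≤ d ^ 2) :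
    |(τ z).re| ≤ d :=
  abs_le_of_sq_le_sq ((trace_sq_le h1 hpos hz hs).trans hzd) hd

/-- If `x*x` is within `d` of the projection `p` in 2-norm, then `‖x(1 - p)‖₂² ≤ d`. -/
theorem tsq_mul_one_sub_le (h1 : τ 1 = 1) (hpos : ∀ x ∈ M, 0 ≤ τ (star x * x))
    (htr : ∀ x ∈ M, ∀ y ∈ M, τ (x * y) = τ (y * x)) {x p : H →L[ℂ] H} (hx : x ∈ M) (hp : p ∈ M)
    (hps : star p = p) (hpp : p * p = p) {d : ℝ} (hd : 0 ≤ d)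
    (h : tsq τ (star x * x - p) ≤ d ^ 2) : tsq τ (x * (1 - p)) ≤ d := by
  set a := star x * x - p with ha
  have haM : a ∈ M := sub_mem (mul_mem (star_mem hx) hx) hp
  have has : star a = a := by simp [ha, hps]
  have hrM : 1 - p ∈ M := sub_mem (one_mem M) hp
  have e : star (x * (1 - p)) * (x * (1 - p)) = (1 - p) * a * (1 - p) := by
    have h0 : p * (1 - p) = 0 := by rw [mul_sub, hpp, mul_one, sub_self]
    have h' : a * (1 - p) = star x * x * (1 - p) := by rw [ha, sub_mul, h0, sub_zero]
    rw [mul_assoc, h', star_mul, star_sub, star_one, hps]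
    simp only [mul_assoc]
  have l1 := tsq_split_left (τ := τ) hps hpp (a * (1 - p))
  have l2 := tsq_split_right htr hp hps hpp haM
  have n1 := tsq_nonneg hpos (mul_mem hp (mul_mem haM hrM))
  have n2 := tsq_nonneg hpos (mul_mem haM hp)
  have hb : tsq τ ((1 - p) * a * (1 - p)) ≤ d ^ 2 := by rw [mul_assoc]; linarith
  have hs : star ((1 - p) * a * (1 - p)) = (1 - p) * a * (1 - p) := by
    simp only [star_mul, star_sub, star_one, hps, has, mul_assoc]
  have := trace_le_of_tsq h1 hpos (mul_mem (mul_mem hrM haM) hrM) hs hd hb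
  rw [tsq, e]
  exact (le_abs_self _).trans this

/-- For the polar decomposition `y = uT` of a contraction, `‖y‖₂² ≤ τ(u*u)` and
`‖y - u‖₂² ≤ τ(u*u) - ‖y‖₂²`. -/
theorem polar_estimates (hpos : ∀ x ∈ M, 0 ≤ τ (star x * x))
    (htr : ∀ x ∈ M, ∀ y ∈ M, τ (x * y) = τ (y * x)) {y u T : H →L[ℂ] H} (hu : u ∈ M) (hT : T ∈ M)
    (hy1 : ‖y‖ ≤ 1) (hT0 : 0 ≤ T) (hTT : T * T = star y * y) (huT : u * T = y)
    (hsT : star u * u * T = T) (hus : u * (star u * u) = u) :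
    tsq τ y ≤ (τ (star u * u)).re ∧ tsq τ (y - u) ≤ (τ (star u * u)).re - tsq τ y := by
  set s := star u * u with hs
  have hsM : s ∈ M := mul_mem (star_mem hu) hu
  have hss : star s = s := by simp [hs]
  have hs2 : s * s = s := by
    calc s * s = star u * (u * s) := by rw [hs]; simp only [mul_assoc]
      _ = s := by rw [hus]
  have hTs : star T = T := (IsSelfAdjoint.of_nonneg hT0).star_eq
  have hTs' : T * s = T := by
    have := congrArg star hsT
    rwa [star_mul, hss, hTs] at this
  have hT1 : T ≤ 1 := by
    have hn : ‖T‖ ≤ 1 := by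
      have h : ‖T‖ * ‖T‖ = ‖y‖ * ‖y‖ := by
        rw [← CStarRing.norm_star_mul_self, ← CStarRing.norm_star_mul_self, hTs, hTT]
      nlinarith [norm_nonneg T, norm_nonneg y]
    exact (CStarAlgebra.norm_le_one_iff_of_nonneg T).1 hn
  have hb : 0 ≤ 1 - T := sub_nonneg.2 hT1
  have hbM : 1 - T ∈ M := sub_mem (one_mem M) hT
  -- `τ(T - T²) ≥ 0`: conjugate `T` by the square root of `1 - T`.
  have k1 : (τ (T * T)).re ≤ (τ T).re := by
    set b := CFC.sqrt (1 - T) with hbdef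
    have hbb : b * b = 1 - T := CFC.sqrt_mul_sqrt_self _ hb
    have hb' : b ∈ M := sqrt_mem M hbM
    have hbs : star b = b := (IsSelfAdjoint.of_nonneg (CFC.sqrt_nonneg (1 - T))).star_eq
    have h := trace_nonneg hpos (mul_mem (mul_mem (star_mem hb') hT) hb')
      (star_left_conjugate_nonneg hT0 b)
    rw [hbs, mul_assoc, htr b hb' _ (mul_mem hT hb'), mul_assoc, hbb, mul_sub, mul_one, map_sub,
      Complex.sub_re] at h
    linarith
  have k2 : (τ T).re ≤ (τ s).re := by
    have h := trace_nonneg hpos (mul_mem (mul_mem (star_mem hsM) hbM) hsM)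
      (star_left_conjugate_nonneg hb s)
    rw [hss, mul_sub, mul_one, sub_mul, hs2, hsT, hTs', map_sub, Complex.sub_re] at h
    linarith
  have ky : tsq τ y = (τ (T * T)).re := by rw [tsq, hTT]
  have kyu : tsq τ (y - u) = (τ (T * T)).re - 2 * (τ T).re + (τ s).re := by
    have h : star (y - u) * (y - u) = T * T - T - T + s := by
      have e1 : star y * u = T := by rw [← huT, star_mul, hTs, mul_assoc, ← hs, hTs']
      have e2 : star u * y = T := by rw [← huT, ← mul_assoc, ← hs, hsT]
      rw [star_sub, sub_mul, mul_sub, mul_sub, e1, e2, ← hTT, ← hs]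
      abel
    rw [tsq, h]
    simp only [map_add, map_sub, Complex.add_re, Complex.sub_re]
    ring
  constructor <;> linarith

end Trace

/-! ### Approximation by a partial isometry -/

theorem stmt2 {H : Type*} [NormedAddCommGroup H] [InnerProductSpace ℂ H] [CompleteSpace H]
    (M : VonNeumannAlgebra H) (τ : (H →L[ℂ] H) →ₗ[ℂ] ℂ)
    -- `τ` is a tracial state on `M`:
    (hτ1 : τ 1 = 1)
    (hτpos : ∀ x ∈ M, 0 ≤ τ (star x * x))
    (hτtr : ∀ x ∈ M, ∀ y ∈ M, τ (x * y) = τ (y * x))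
    -- any two projections in `M` with the same trace are Murray-von Neumann equivalent:
    (hequiv : ∀ e ∈ M, ∀ f ∈ M, star e = e → e * e = e → star f = f → f * f = f →
      τ e = τ f → ∃ w ∈ M, star w * w = e ∧ w * star w = f)
    -- `p` and `q` are Murray-von Neumann equivalent projections in `M`:
    (p q : H →L[ℂ] H) (hpM : p ∈ M) (hqM : q ∈ M)
    (hp1 : star p = p) (hp2 : p * p = p) (hq1 : star q = q) (hq2 : q * q = q)
    (hpq : ∃ v ∈ M, star v * v = p ∧ v * star v = q)
    (ε δ : ℝ) (hε0 : 0 < ε) (hε1 : ε < 1) (hδ0 : 0 < δ) (hδ : δ < ε ^ 16 / 11 ^ 16)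
    (x : H →L[ℂ] H) (hxM : x ∈ M) (hx : ‖x‖ ≤ 1)
    (h1 : tnorm τ (star x * x - p) ≤ δ) (h2 : tnorm τ (x * star x - q) ≤ δ) :
    ∃ v ∈ M, star v * v = p ∧ v * star v = q ∧ tnorm τ (x - v) < ε := by
  have hδ' : 0 ≤ δ := hδ0.le
  have toSq : ∀ z ∈ M, tnorm τ z ≤ δ → tsq τ z ≤ δ ^ 2 := by
    intro z hz h
    have h0 := tsq_nonneg hτpos hz
    calc tsq τ z = (tnorm τ z) ^ 2 := (Real.sq_sqrt h0).symm
      _ ≤ δ ^ 2 := pow_le_pow_left₀ (Real.sqrt_nonneg _) h 2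
  have hxs : star x ∈ M := star_mem hxM
  have h1' := toSq _ (sub_mem (mul_mem hxs hxM) hpM) h1
  have h2' := toSq _ (sub_mem (mul_mem hxM hxs) hqM) h2
  have hp' : 1 - p ∈ M := sub_mem (one_mem M) hpM
  have hq' : 1 - q ∈ M := sub_mem (one_mem M) hqM
  have A1 : tsq τ (x * (1 - p)) ≤ δ :=
    tsq_mul_one_sub_le hτ1 hτpos hτtr hxM hpM hp1 hp2 hδ' h1'
  have A2 : tsq τ ((1 - q) * x) ≤ δ := by
    have h := tsq_mul_one_sub_le hτ1 hτpos hτtr hxs hqM hq1 hq2 hδ' (by rwa [star_star])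
    have e : star x * (1 - q) = star ((1 - q) * x) := by
      rw [star_mul, star_sub, star_one, hq1]
    rwa [e, tsq_star hτtr (mul_mem hq' hxM)] at h
  have A3 : (τ p).re - δ ≤ tsq τ x := by
    have h := trace_le_of_tsq hτ1 hτpos (sub_mem (mul_mem hxs hxM) hpM)
      (by simp [hp1]) hδ' h1'
    rw [map_sub, Complex.sub_re] at h
    have := (abs_le.1 h).1
    rw [tsq]
    linarith
  set y := q * x * p with hy
  have hyM : y ∈ M := mul_mem (mul_mem hqM hxM) hpM
  have S1 := tsq_split_left (τ := τ) hq1 hq2 x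
  have S2 := tsq_split_right hτtr hpM hp1 hp2 (mul_mem hqM hxM)
  rw [← hy] at S2
  have S3 := tsq_split_left (τ := τ) hq1 hq2 (x * (1 - p))
  rw [← mul_assoc] at S3
  have n3 := tsq_nonneg hτpos (mul_mem hq' (mul_mem hxM hp'))
  have A4 : (τ p).re - tsq τ y ≤ 3 * δ := by linarith
  have A5 : tsq τ (x - y) ≤ 4 * δ := by
    have e : x - y = (1 - q) * x + q * x * (1 - p) := by rw [hy]; noncomm_ring
    have h := tsq_add_le hτpos (mul_mem hq' hxM) (mul_mem (mul_mem hqM hxM) hp')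
    rw [← e] at h
    linarith
  have hy1 : ‖y‖ ≤ 1 := by
    have proj : ∀ e : H →L[ℂ] H, star e = e → e * e = e → ‖e‖ ≤ 1 := fun e hs he =>
      IsStarProjection.norm_le e ⟨he, hs⟩
    calc ‖y‖ ≤ ‖q‖ * ‖x‖ * ‖p‖ :=
          (norm_mul_le _ _).trans (mul_le_mul_of_nonneg_right (norm_mul_le _ _) (norm_nonneg _))
      _ ≤ 1 * 1 * 1 := by gcongr <;> first | exact proj _ hq1 hq2 | exact proj _ hp1 hp2
      _ = 1 := by norm_num
  obtain ⟨u, huM, T, hTM, hT0, hTT, huT, hsT, hus, hA⟩ := exists_polar M hyM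
  obtain ⟨B1, B2⟩ := polar_estimates hτpos hτtr huM hTM hy1 hT0 hTT huT hsT hus
  have husM : star u ∈ M := star_mem huM
  have hTs : star T = T := (IsSelfAdjoint.of_nonneg hT0).star_eq
  have hu' : star u * u * star u = star u := by
    have := congrArg star hus
    simpa [star_mul, mul_assoc] using this
  have hqy : q * y = y := by rw [hy, ← mul_assoc, ← mul_assoc, hq2]
  have hyp : y * p = y := by rw [hy, mul_assoc, hp2]
  have hqu : q * u = u := by
    have h := hA (q * u - u) (by rw [sub_mul, mul_assoc, huT, hqy, sub_self])
    rw [sub_mul, mul_assoc, hus] at h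
    exact sub_eq_zero.1 h
  have hup : u * p = u := by
    -- `‖T(p - 1)ξ‖ = ‖y(p - 1)ξ‖ = 0` for all `ξ`.
    have hTp : T * p = T := by
      have h0 : star (T * p - T) * (T * p - T) = 0 := by
        have e : star (T * p - T) * (T * p - T) = star (y * p - y) * (y * p - y) := by
          have e1 : star (T * p - T) * (T * p - T) = (star p - 1) * (T * T) * (p - 1) := by
            rw [star_sub, star_mul, hTs]; noncomm_ring
          have e2 : star (y * p - y) * (y * p - y) = (star p - 1) * (star y * y) * (p - 1) := by
            rw [star_sub, star_mul]; noncomm_ring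
          rw [e1, e2, hTT]
        rw [e, hyp, sub_self, mul_zero]
      exact sub_eq_zero.1 ((CStarRing.star_mul_self_eq_zero_iff _).1 h0)
    have hpT : p * T = T := by
      have := congrArg star hTp
      rwa [star_mul, hTs, hp1] at this
    have h := hA (p - 1) (by rw [sub_mul, hpT, one_mul, sub_self])
    have h' : p * (star u * u) = star u * u := by rwa [sub_mul, one_mul, sub_eq_zero] at h
    have h'' := congrArg star h'
    simp only [star_mul, star_star, hp1] at h''
    calc u * p = u * (star u * u * p) := by rw [← mul_assoc, hus]
      _ = u := by rw [h'', hus]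
  have hpu : p * star u = star u := by
    have := congrArg star hup
    rwa [star_mul, hp1] at this
  have huq : star u * q = star u := by
    have := congrArg star hqu
    rwa [star_mul, hq1] at this
  have hτpq : τ p = τ q := by
    obtain ⟨v₀, hv₀, ha, hb⟩ := hpq
    rw [← ha, ← hb, hτtr _ (star_mem hv₀) _ hv₀]
  have hss : star u * u * (star u * u) = star u * u := by rw [← mul_assoc, hu']
  have hff : u * star u * (u * star u) = u * star u := by
    rw [mul_assoc, ← mul_assoc (star u), hu']
  obtain ⟨w, hwM, hw1, hw2⟩ := hequiv (p - star u * u) (sub_mem hpM (mul_mem husM huM))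
    (q - u * star u) (sub_mem hqM (mul_mem huM husM))
    (by simp [hp1])
    (by
      rw [sub_mul, mul_sub, mul_sub, hp2, hss, mul_assoc, hup, ← mul_assoc, hpu]
      abel)
    (by simp [hq1])
    (by
      rw [sub_mul, mul_sub, mul_sub, hq2, hff, mul_assoc, huq, ← mul_assoc, hqu]
      abel)
    (by rw [map_sub, map_sub, hτpq, hτtr _ husM _ huM])
  have hw3 : w * (p - star u * u) = w := by
    rw [← hw1]
    refine mul_star_mul_self_of_idem w ?_
    rw [hw1, sub_mul, mul_sub, mul_sub, hp2, hss, mul_assoc, hup, ← mul_assoc, hpu]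
    abel
  have hw4 : (q - u * star u) * w = w := by rw [← hw2, mul_assoc, hw1, hw3]
  have c1 : star u * w = 0 := by
    rw [← hw4, ← mul_assoc, mul_sub, huq, ← mul_assoc, hu', sub_self, zero_mul]
  have c2 : w * star u = 0 := by
    rw [← hw3, mul_assoc, sub_mul, hpu, hu', sub_self, mul_zero]
  have c1' : star w * u = 0 := by simpa using congrArg star c1
  have c2' : u * star w = 0 := by simpa using congrArg star c2
  refine ⟨u + w, add_mem huM hwM, ?_, ?_, ?_⟩
  · rw [star_add, add_mul, mul_add, mul_add, c1, c1', hw1]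
    abel
  · rw [star_add, add_mul, mul_add, mul_add, c2, c2', hw2]
    abel
  · have C1 : tsq τ (-w) ≤ 3 * δ := by
      rw [tsq, star_neg, neg_mul_neg, hw1, map_sub, Complex.sub_re]
      linarith
    have e : x - (u + w) = (x - y) + ((y - u) + -w) := by abel
    have D1 := tsq_add_le hτpos (sub_mem hyM huM) (neg_mem hwM)
    have D2 := tsq_add_le hτpos (sub_mem hxM hyM) (add_mem (sub_mem hyM huM) (neg_mem hwM))
    rw [← e] at D2
    have B3 : (τ (star u * u)).re ≤ (τ p).re := by
      have h := tsq_nonneg hτpos hwM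
      rw [tsq, hw1, map_sub, Complex.sub_re] at h
      linarith
    have F : tsq τ (x - (u + w)) < ε ^ 2 := by
      have hε : ε ^ 16 ≤ ε ^ 2 := pow_le_pow_of_le_one hε0.le hε1.le (by norm_num)
      have hε2 : 0 < ε ^ 2 := by positivity
      rw [lt_div_iff₀ (by norm_num)] at hδ
      norm_num at hδ
      linarith
    exact (Real.sqrt_lt' hε0).2 F
end

section
/- Let A be a unital complex *-algebra, let M ⊆ A be a unital *-subalgebra, let e ∈ A satisfy e = e* and e² = e, and let E : M → M be a linear map such that e x e = E(x) e for all x ∈ M. Then the set M + span{ x e y : x, y ∈ M } is a unital *-subalgebra of A containing M and e; consequently it equals the *-subalgebra of A generated by M ∪ {e}. -/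
/-!
Let `S` be the span of the elements `x * e * y` with `x, y ∈ M`. The space `S` is an `M`-bimodule, it
is closed under `star` because `e` is self-adjoint, and it is closed under multiplication because
`(x * e * y) * (x' * e * y') = (x * E (y * x')) * e * y'`. Hence `M + S` is a star subalgebra; it
contains `e = 1 * e * 1`, and each of its elements is a polynomial in `M ∪ {e}`, so it is the star
subalgebra generated by that set.
-/

open Pointwise

theorem stmt9 {A : Type*} [Ring A] [Algebra ℂ A] [StarRing A] [StarModule ℂ A]
    (M : StarSubalgebra ℂ A) (e : A) (he : star e = e) (he2 : e * e = e)
    (E : M →ₗ[ℂ] M)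
    (hE : ∀ x : M, e * (x : A) * e = (E x : A) * e) :
    ∃ T : StarSubalgebra ℂ A,
      (T : Set A) =
        (M : Set A) +
          (Submodule.span ℂ {z : A | ∃ x ∈ M, ∃ y ∈ M, z = x * e * y} : Set A) ∧
      M ≤ T ∧ e ∈ T ∧ T = StarAlgebra.adjoin ℂ ((M : Set A) ∪ {e}) := by
  set S : Submodule ℂ A := Submodule.span ℂ {z : A | ∃ x ∈ M, ∃ y ∈ M, z = x * e * y} with hS
  have gen : ∀ x ∈ M, ∀ y ∈ M, x * e * y ∈ S := fun x hx y hy =>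
    Submodule.subset_span ⟨x, hx, y, hy, rfl⟩
  have left_mul : ∀ m ∈ M, ∀ s ∈ S, m * s ∈ S := by
    intro m hm s hs
    induction hs using Submodule.span_induction with
    | mem z hz =>
      obtain ⟨x, hx, y, hy, rfl⟩ := hz
      simpa only [mul_assoc] using gen (m * x) (mul_mem hm hx) y hy
    | zero => simp
    | add a b _ _ ha hb => rw [mul_add]; exact add_mem ha hb
    | smul c a _ ha => rw [mul_smul_comm]; exact S.smul_mem c ha
  have right_mul : ∀ m ∈ M, ∀ s ∈ S, s * m ∈ S := by
    intro m hm s hs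
    induction hs using Submodule.span_induction with
    | mem z hz =>
      obtain ⟨x, hx, y, hy, rfl⟩ := hz
      simpa only [mul_assoc] using gen x hx (y * m) (mul_mem hy hm)
    | zero => simp
    | add a b _ _ ha hb => rw [add_mul]; exact add_mem ha hb
    | smul c a _ ha => rw [smul_mul_assoc]; exact S.smul_mem c ha
  have e_mul : ∀ m ∈ M, ∀ s ∈ S, e * m * s ∈ S := by
    intro m hm s hs
    induction hs using Submodule.span_induction with
    | mem z hz =>
      obtain ⟨x, hx, y, hy, rfl⟩ := hz
      have h := hE ⟨m * x, mul_mem hm hx⟩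
      have key : e * m * (x * e * y) = (E ⟨m * x, mul_mem hm hx⟩ : A) * e * y := by
        rw [← h]; simp only [mul_assoc]
      rw [key]
      exact gen _ (E _).2 y hy
    | zero => simp
    | add a b _ _ ha hb => rw [mul_add]; exact add_mem ha hb
    | smul c a _ ha => rw [mul_smul_comm]; exact S.smul_mem c ha
  have mul_S : ∀ t ∈ S, ∀ s ∈ S, t * s ∈ S := by
    intro t ht s hs
    induction ht using Submodule.span_induction with
    | mem z hz =>
      obtain ⟨x, hx, y, hy, rfl⟩ := hz
      simpa only [mul_assoc] using left_mul x hx _ (e_mul y hy s hs)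
    | zero => simp
    | add a b _ _ ha hb => rw [add_mul]; exact add_mem ha hb
    | smul c a _ ha => rw [smul_mul_assoc]; exact S.smul_mem c ha
  have star_S : ∀ s ∈ S, star s ∈ S := by
    intro s hs
    induction hs using Submodule.span_induction with
    | mem z hz =>
      obtain ⟨x, hx, y, hy, rfl⟩ := hz
      simpa only [star_mul, he, mul_assoc] using gen _ (star_mem hy) _ (star_mem hx)
    | zero => simp
    | add a b _ _ ha hb => rw [star_add]; exact add_mem ha hb
    | smul c a _ ha => rw [star_smul]; exact S.smul_mem _ ha
  have M_sub : ∀ m ∈ M, m ∈ (M : Set A) + (S : Set A) := fun m hm =>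
    Set.mem_add.2 ⟨m, hm, 0, S.zero_mem, add_zero m⟩
  let T : StarSubalgebra ℂ A :=
    { carrier := (M : Set A) + (S : Set A)
      mul_mem' := by
        rintro _ _ ⟨m, hm, s, hs, rfl⟩ ⟨n, hn, t, ht, rfl⟩
        refine Set.mem_add.2 ⟨m * n, mul_mem hm hn, m * t + s * n + s * t,
          add_mem (add_mem (left_mul m hm t ht) (right_mul n hn s hs)) (mul_S s hs t ht), ?_⟩
        noncomm_ring
      add_mem' := by
        rintro _ _ ⟨m, hm, s, hs, rfl⟩ ⟨n, hn, t, ht, rfl⟩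
        exact Set.mem_add.2 ⟨m + n, add_mem hm hn, s + t, add_mem hs ht, add_add_add_comm m n s t⟩
      algebraMap_mem' := fun c => M_sub _ (algebraMap_mem M c)
      star_mem' := by
        rintro _ ⟨m, hm, s, hs, rfl⟩
        exact Set.mem_add.2 ⟨star m, star_mem hm, star s, star_S s hs, (star_add m s).symm⟩ }
  have hMT : M ≤ T := M_sub
  have heT : e ∈ T :=
    Set.mem_add.2 ⟨0, zero_mem M, e, by simpa using gen 1 (one_mem M) 1 (one_mem M), zero_add e⟩
  refine ⟨T, rfl, hMT, heT, le_antisymm ?_ ?_⟩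
  · have hM : ∀ m ∈ M, m ∈ StarAlgebra.adjoin ℂ ((M : Set A) ∪ {e}) := fun m hm =>
      StarAlgebra.subset_adjoin ℂ _ (Or.inl hm)
    have hSadj : S ≤ (StarAlgebra.adjoin ℂ ((M : Set A) ∪ {e})).toSubalgebra.toSubmodule := by
      refine Submodule.span_le.2 ?_
      rintro _ ⟨x, hx, y, hy, rfl⟩
      change x * e * y ∈ StarAlgebra.adjoin ℂ ((M : Set A) ∪ {e})
      exact mul_mem (mul_mem (hM x hx) (StarAlgebra.subset_adjoin ℂ _ (Or.inr rfl))) (hM y hy)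
    rintro _ ⟨m, hm, s, hs, rfl⟩
    exact add_mem (hM m hm) (hSadj hs)
  · exact StarAlgebra.adjoin_le (Set.union_subset hMT (Set.singleton_subset_iff.2 heT))
end
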